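/- arXiv:2408.00514 — 8 statements merged into one kernel-verified Lean document; each statement's English description precedes it below -/
import Mathlib

section
/- Let E be a cartesian closed category with pullbacks, let Z be an object of E, and let f : W → X be a morphism. If f is stably orthogonal to Z (i.e., every pullback of f along any morphism of E is orthogonal to Z), then f is internally orthogonal to Z (i.e., the induced map Z^f : Z^X → Z^W is an isomorphism). -/
open CategoryTheory Category Limits MonoidalCategory

universe u v

/-!
A generalized element `T ⟶ Z^X` is a morphism `X ⊗ T ⟶ Z`, and under this correspondence
composition with `Z^f` becomes precomposition with `f ▷ T`. By the Yoneda lemma, `Z^f` is therefore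
an isomorphism as soon as every `f ▷ T` is orthogonal to `Z`; and `f ▷ T` is the pullback of `f`
along the projection `X ⊗ T ⟶ X`.
-/

section CartesianMonoidal

open CartesianMonoidalCategory

variable {C : Type u} [Category.{v} C] [CartesianMonoidalCategory C]

lemma isPullback_fst_snd_toUnit (X T : C) :
    IsPullback (fst X T) (snd X T) (toUnit X) (toUnit T) :=
  IsPullback.of_is_product' (tensorProductIsBinaryProduct X T) isTerminalTensorUnit

lemma isPullback_fst_whiskerRight {W X : C} (f : W ⟶ X) (T : C) :
    IsPullback (fst W T) (f ▷ T) f (fst X T) := by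
  have outer_square :
      IsPullback (fst W T) (f ▷ T ≫ snd X T) (f ≫ toUnit X) (toUnit T) := by
    simpa only [whiskerRight_snd, comp_toUnit] using isPullback_fst_snd_toUnit W T
  exact outer_square.of_bot (whiskerRight_fst f T).symm (isPullback_fst_snd_toUnit X T)

end CartesianMonoidal

lemma isIso_pre_app_iff_bijective_whiskerRight_comp {C : Type u} [Category.{v} C]
    [MonoidalCategory C] {W X : C} [Closed W] [Closed X] (f : W ⟶ X) (Z : C) :
    IsIso ((MonoidalClosed.pre f).app Z) ↔
      ∀ T : C, Function.Bijective (fun g : X ⊗ T ⟶ Z ↦ f ▷ T ≫ g) := by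
  rw [isIso_iff_yoneda_map_bijective]
  refine forall_congr' fun T ↦ ?_
  have curry_intertwines :
      (fun h : T ⟶ (ihom X).obj Z ↦ h ≫ (MonoidalClosed.pre f).app Z) ∘
          (ihom.adjunction X).homEquiv T Z =
        (ihom.adjunction W).homEquiv T Z ∘ fun g : X ⊗ T ⟶ Z ↦ f ▷ T ≫ g :=
    funext fun g ↦ MonoidalClosed.curry_pre_app f g
  rw [← Equiv.bijective_comp ((ihom.adjunction X).homEquiv T Z), curry_intertwines,
    Equiv.comp_bijective]

theorem stablyOrthogonal_implies_internallyOrthogonal_general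
    {E : Type u} [Category.{v} E] [CartesianMonoidalCategory E] (Z : E) {W X : E}
    [Closed W] [Closed X] (f : W ⟶ X)
    (hstable : ∀ {V Y : E} (f' : V ⟶ Y) (a : V ⟶ W) (b : Y ⟶ X),
      IsPullback a f' f b → ∀ g : V ⟶ Z, ∃! g' : Y ⟶ Z, f' ≫ g' = g) :
    IsIso ((MonoidalClosed.pre f).app Z) := by
  rw [isIso_pre_app_iff_bijective_whiskerRight_comp]
  intro T
  rw [Function.bijective_iff_existsUnique]
  exact hstable (f ▷ T) _ _ (isPullback_fst_whiskerRight f T)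

/-- In a cartesian closed category with pullbacks, if `f : W ⟶ X` is stably
orthogonal to `Z` (every pullback of `f` along any morphism is orthogonal to `Z`), then `f`
is internally orthogonal to `Z`, i.e. `Z^f : Z^X ⟶ Z^W` is an isomorphism. -/
theorem stablyOrthogonal_implies_internallyOrthogonal
    {E : Type u} [Category.{v} E] [CartesianMonoidalCategory E] [MonoidalClosed E]
    [HasPullbacks E] (Z : E) {W X : E} (f : W ⟶ X)
    (hstable : ∀ {V Y : E} (f' : V ⟶ Y) (a : V ⟶ W) (b : Y ⟶ X),
      IsPullback a f' f b → ∀ g : V ⟶ Z, ∃! g' : Y ⟶ Z, f' ≫ g' = g) :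
    IsIso ((MonoidalClosed.pre f).app Z) :=
  stablyOrthogonal_implies_internallyOrthogonal_general Z f hstable
end

section
/- Let E be a cartesian closed category with finite products, let Z be an object of E, and let f : W → X be a morphism. Then f is internally orthogonal to Z if and only if, for every object Y of E, the morphism f × id_Y : W × Y → X × Y is orthogonal to Z. -/
open CategoryTheory Category Limits MonoidalCategory

universe u v

section

variable {E : Type u} [Category.{v} E] [MonoidalCategory E] {W X : E} [Closed W] [Closed X]

theorem bijective_comp_pre_app_iff_bijective_whiskerRight_comp (Z : E) (f : W ⟶ X) (Y : E) :
    Function.Bijective (fun h : Y ⟶ (ihom X).obj Z ↦ h ≫ (MonoidalClosed.pre f).app Z) ↔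
      Function.Bijective (fun g : X ⊗ Y ⟶ Z ↦ f ▷ Y ≫ g) := by
  let curryX : (X ⊗ Y ⟶ Z) ≃ (Y ⟶ (ihom X).obj Z) := (ihom.adjunction X).homEquiv Y Z
  let curryW : (W ⊗ Y ⟶ Z) ≃ (Y ⟶ (ihom W).obj Z) := (ihom.adjunction W).homEquiv Y Z
  have curry_square : (fun h : Y ⟶ (ihom X).obj Z ↦ h ≫ (MonoidalClosed.pre f).app Z) ∘ curryX =
      curryW ∘ fun g : X ⊗ Y ⟶ Z ↦ f ▷ Y ≫ g :=
    funext fun g ↦ MonoidalClosed.curry_pre_app f g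
  rw [← curryX.bijective_comp, curry_square, curryW.comp_bijective]

theorem internallyOrthogonal_iff_prod_orthogonal_general (Z : E) (f : W ⟶ X) :
    IsIso ((MonoidalClosed.pre f).app Z) ↔
      ∀ (Y : E) (g : W ⊗ Y ⟶ Z), ∃! g' : X ⊗ Y ⟶ Z, (f ▷ Y) ≫ g' = g := by
  rw [isIso_iff_yoneda_map_bijective]
  refine forall_congr' fun Y ↦ ?_
  rw [bijective_comp_pre_app_iff_bijective_whiskerRight_comp, Function.bijective_iff_existsUnique]

end

/-- In a cartesian closed category with finite products, a morphism `f : W ⟶ X`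
is internally orthogonal to `Z` (i.e. `Z^f : Z^X ⟶ Z^W` is an isomorphism) if and only if,
for every object `Y`, the morphism `f × id_Y : W × Y ⟶ X × Y` is orthogonal to `Z`. -/
theorem internallyOrthogonal_iff_prod_orthogonal
    {E : Type u} [Category.{v} E] [CartesianMonoidalCategory E] [MonoidalClosed E]
    (Z : E) {W X : E} (f : W ⟶ X) :
    IsIso ((MonoidalClosed.pre f).app Z) ↔
      ∀ (Y : E) (g : W ⊗ Y ⟶ Z), ∃! g' : X ⊗ Y ⟶ Z, (f ▷ Y) ≫ g' = g :=
  internallyOrthogonal_iff_prod_orthogonal_general Z f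
end

section
/- Let E be an elementary topos, Z an object of E, and let F be the least subtopos of E containing Z, with reflector L : E → F. Then every F-dense monomorphism u : U → X in E (i.e., one with L u an isomorphism) is internally orthogonal to Z, that is, Z^u : Z^X → Z^U is an isomorphism. -/
open CategoryTheory Category Limits MonoidalCategory

universe u v u' v' u₂ v₂

/-- A subobject classifier for a category with a (chosen) terminal object. -/
structure Classifier (E : Type u) [Category.{v} E] [CartesianMonoidalCategory E] where
  Ω : E
  truth : 𝟙_ E ⟶ Ω
  classifies : ∀ {U X : E} (m : U ⟶ X), Mono m →
    ∃! χ : X ⟶ Ω, IsPullback (CartesianMonoidalCategory.toUnit U) m truth χ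

/-!
Maps `A ⟶ Z^X` are maps `X ⊗ A ⟶ Z`, so `Z^u` is an isomorphism as soon as every `u ▷ A` is
orthogonal to `Z`. The reflector preserves binary products, so it inverts `u ▷ A` whenever it
inverts `u`; and every morphism inverted by the reflector is orthogonal to the objects of the
subtopos, among them `Z`.
-/

section Orthogonality

variable {C : Type u} [Category.{v} C] {D : Type u'} [Category.{v'} D] {L : C ⥤ D} {R : D ⥤ C}

theorem isLocal_range_obj_of_isIso_map (adj : L ⊣ R) {A B : C} (f : A ⟶ B) [IsIso (L.map f)] :
    ObjectProperty.isLocal (· ∈ Set.range R.obj) f := by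
  rintro _ ⟨W, rfl⟩
  have precomp_eq : (fun g : B ⟶ R.obj W => f ≫ g) =
      adj.homEquiv A W ∘ (fun g => L.map f ≫ g) ∘ (adj.homEquiv B W).symm := by
    ext g
    simp [adj.homEquiv_naturality_left]
  rw [precomp_eq, EquivLike.comp_bijective, EquivLike.bijective_comp]
  exact (asIso (L.map f)).homFromEquiv.symm.bijective

theorem bijective_precomp_of_isIso_map (adj : L ⊣ R) {A B : C} (f : A ⟶ B) [IsIso (L.map f)]
    (Z : C) [IsIso (adj.unit.app Z)] : Function.Bijective (fun g : B ⟶ Z => f ≫ g) := by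
  have f_local := isLocal_range_obj_of_isIso_map adj f
  rw [← ObjectProperty.isoClosure_isLocal] at f_local
  exact f_local Z ⟨R.obj (L.obj Z), ⟨L.obj Z, rfl⟩, ⟨asIso (adj.unit.app Z)⟩⟩

end Orthogonality

open CartesianMonoidalCategory in
theorem isIso_map_whiskerRight {C : Type u} [Category.{v} C] [CartesianMonoidalCategory C]
    {D : Type u'} [Category.{v'} D] (L : C ⥤ D) {U X : C} (u : U ⟶ X) (A : C)
    [PreservesLimit (pair U A) L] [PreservesLimit (pair X A) L] [IsIso (L.map u)] :
    IsIso (L.map (u ▷ A)) := by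
  have isLimit_map (Y : C) [PreservesLimit (pair Y A) L] :
      IsLimit (BinaryFan.mk (L.map (fst Y A)) (L.map (snd Y A))) :=
    mapIsLimitOfPreservesOfIsLimit L _ _ (tensorProductIsBinaryProduct Y A)
  have isLimit_comp : IsLimit (BinaryFan.mk (L.map (fst U A) ≫ L.map u) (L.map (snd U A))) :=
    BinaryFan.isLimitCompLeftIso _ (L.map u) (isLimit_map U)
  have map_comp_fst : L.map (u ▷ A) ≫ L.map (fst X A) = L.map (fst U A) ≫ L.map u := by
    rw [← L.map_comp, whiskerRight_fst, L.map_comp]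
  have map_comp_snd : L.map (u ▷ A) ≫ L.map (snd X A) = L.map (snd U A) := by
    rw [← L.map_comp, whiskerRight_snd]
  let φ : BinaryFan.mk (L.map (fst U A) ≫ L.map u) (L.map (snd U A)) ⟶
      BinaryFan.mk (L.map (fst X A)) (L.map (snd X A)) :=
    { hom := L.map (u ▷ A)
      w := by rintro ⟨_ | _⟩; exacts [map_comp_fst, map_comp_snd] }
  have : IsIso φ := isLimit_comp.hom_isIso (isLimit_map X) φ
  exact inferInstanceAs (IsIso ((Cone.forget _).map φ))

theorem isIso_pre_app_iff {C : Type u} [Category.{v} C] [MonoidalCategory C] {U X : C}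
    [Closed U] [Closed X] (u : U ⟶ X) (Z : C) :
    IsIso ((MonoidalClosed.pre u).app Z) ↔
      ∀ A : C, Function.Bijective (fun g : X ⊗ A ⟶ Z => u ▷ A ≫ g) := by
  rw [isIso_iff_yoneda_map_bijective]
  refine forall_congr' fun A => ?_
  have postcomp_eq : (fun g : A ⟶ (ihom X).obj Z => g ≫ (MonoidalClosed.pre u).app Z) =
      (ihom.adjunction U).homEquiv A Z ∘ (fun g => u ▷ A ≫ g) ∘
        ((ihom.adjunction X).homEquiv A Z).symm := by
    ext g
    exact (MonoidalClosed.eq_curry_iff _ _).2 (MonoidalClosed.uncurry_pre_app _ _ _)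
  rw [postcomp_eq, EquivLike.comp_bijective, EquivLike.bijective_comp]

theorem dense_implies_internallyOrthogonal_general
    {E : Type u} [Category.{v} E] [CartesianMonoidalCategory E]
    {F : Type u'} [Category.{v'} F] {i : F ⥤ E} {L : E ⥤ F} (adj : L ⊣ i)
    [PreservesLimitsOfShape (Discrete WalkingPair) L]
    (Z : E) [IsIso (adj.unit.app Z)]
    {U X : E} [Closed U] [Closed X] (u : U ⟶ X) [IsIso (L.map u)] :
    IsIso ((MonoidalClosed.pre u).app Z) := by
  rw [isIso_pre_app_iff]
  intro A
  have : IsIso (L.map (u ▷ A)) := isIso_map_whiskerRight L u A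
  exact bijective_precomp_of_isIso_map adj (u ▷ A) Z

/-- Let `E` be an elementary topos, `Z` an object of `E`, and let `F` (with full
and faithful inclusion `i`, reflector `L ⊣ i` preserving finite limits) be the least subtopos
of `E` containing `Z`.  Then every `F`-dense monomorphism `u : U ⟶ X` (one with `L.map u`
an isomorphism) is internally orthogonal to `Z`, i.e. `Z^u : Z^X ⟶ Z^U` is an isomorphism. -/
theorem dense_implies_internallyOrthogonal
    {E : Type u} [Category.{v} E] [HasFiniteLimits E] [CartesianMonoidalCategory E]
    [MonoidalClosed E] (c : _root_.Classifier E) (Z : E)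
    {F : Type u'} [Category.{v'} F] (i : F ⥤ E) [i.Full] [i.Faithful]
    (L : E ⥤ F) (adj : L ⊣ i) [PreservesFiniteLimits L]
    (hZ : IsIso (adj.unit.app Z))
    (hleast : ∀ {F' : Type u₂} [Category.{v₂} F'] (i' : F' ⥤ E), i'.Full → i'.Faithful →
      ∀ (L' : E ⥤ F') (adj' : L' ⊣ i'), PreservesFiniteLimits L' →
      IsIso (adj'.unit.app Z) → ∀ X : E, IsIso (adj.unit.app X) → IsIso (adj'.unit.app X))
    {U X : E} (u : U ⟶ X) (hu : Mono u) (hdense : IsIso (L.map u)) :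
    IsIso ((MonoidalClosed.pre u).app Z) :=
  dense_implies_internallyOrthogonal_general adj Z u
end

section
/- Let E and S be cartesian closed categories with finite limits, let R : S → E be a fully faithful functor with a left adjoint L : E → S that preserves finite products. Then for every object A of S and every object Y of E, the canonical morphism R(A^{L Y}) → (R A)^Y (given by transposing the composite L(R(A^{L Y}) × Y) ≅ L(R(A^{L Y})) × L Y → A^{L Y} × L Y → A, using that L preserves finite products and the counit of L ⊣ R) is an isomorphism, naturally in both A and Y. -/
open CategoryTheory Category Limits MonoidalCategory
open scoped CartesianClosed

universe u v u' v'

/-- The canonical morphism `R(A^{L Y}) ⟶ (R A)^Y`, obtained by transposing (along `L ⊣ R`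
and currying) the composite
`L(Y × R(A^{L Y})) ⟶ L Y × L(R(A^{L Y})) ⟶ L Y × A^{L Y} ⟶ A`,
where the first map is the canonical comparison (an iso when `L` preserves finite products),
the second uses the counit of `L ⊣ R`, and the third is evaluation. -/
noncomputable def canonicalExpComparison
    {E : Type u} [Category.{v} E] [CartesianMonoidalCategory E] [MonoidalClosed E]
    {S : Type u'} [Category.{v'} S] [CartesianMonoidalCategory S] [MonoidalClosed S]
    (R : S ⥤ E) (L : E ⥤ S) (adj : L ⊣ R) (A : S) (Y : E) :
    R.obj ((L.obj Y) ⟹ A) ⟶ (Y ⟹ R.obj A) :=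
  MonoidalClosed.curry ((adj.homEquiv _ _)
    (CartesianMonoidalCategory.lift (L.map (CartesianMonoidalCategory.fst _ _))
        (L.map (CartesianMonoidalCategory.snd _ _) ≫ adj.counit.app ((L.obj Y) ⟹ A)) ≫
      (ihom.ev (L.obj Y)).app A))

/-!
Fix `Y`. The functor `A ↦ R(A^{L Y})` is right adjoint to `X ↦ L Y × L X`, and `A ↦ (R A)^Y` is
right adjoint to `X ↦ L(Y × X)`. The canonical morphism is the conjugate, under these composite
adjunctions, of the product comparison `L(Y × X) ⟶ L Y × L X`. Conjugation preserves isomorphisms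
and turns the naturality of the product comparison in `Y` into that of the canonical morphism.
-/

lemma conjugateEquiv_app_eq_homEquiv {C : Type u} [Category.{v} C] {D : Type u'} [Category.{v'} D]
    {L₁ L₂ : C ⥤ D} {R₁ R₂ : D ⥤ C} (adj₁ : L₁ ⊣ R₁) (adj₂ : L₂ ⊣ R₂) (α : L₂ ⟶ L₁) (d : D) :
    (conjugateEquiv adj₁ adj₂ α).app d =
      adj₂.homEquiv _ _ (α.app (R₁.obj d) ≫ adj₁.counit.app d) := by
  rw [eq_comm, adj₂.homEquiv_apply_eq, adj₂.homEquiv_counit]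
  exact (conjugateEquiv_counit adj₁ adj₂ α d).symm

section

open CartesianMonoidalCategory

variable {E : Type u} [Category.{v} E] [CartesianMonoidalCategory E]
  {S : Type u'} [Category.{v'} S] [CartesianMonoidalCategory S]

lemma prodComparison_comp_whiskerLeft (L : E ⥤ S) (Y X : E) {B : S} (f : L.obj X ⟶ B) :
    CartesianMonoidalCategory.prodComparison L Y X ≫ L.obj Y ◁ f =
      lift (L.map (fst Y X)) (L.map (snd Y X) ≫ f) := by
  simp only [CartesianMonoidalCategory.prodComparison, lift_whiskerLeft]

lemma whiskerRight_tensoringLeft_map_comp_prodComparisonNatTrans (L : E ⥤ S) {Y Y' : E}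
    (g : Y' ⟶ Y) :
    Functor.whiskerRight ((tensoringLeft E).map g) L ≫
        CartesianMonoidalCategory.prodComparisonNatTrans L Y =
      CartesianMonoidalCategory.prodComparisonNatTrans L Y' ≫
        Functor.whiskerLeft L ((tensoringLeft S).map (L.map g)) :=
  (prodComparisonBifunctorNatTrans L).naturality g

end

section

variable {E : Type u} [Category.{v} E] [CartesianMonoidalCategory E] [MonoidalClosed E]
  {S : Type u'} [Category.{v'} S] [CartesianMonoidalCategory S] [MonoidalClosed S]
  (R : S ⥤ E) (L : E ⥤ S) (adj : L ⊣ R)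

/-- The canonical morphism `R(A^{L Y}) ⟶ (R A)^Y` as a natural transformation in `A`, encoded as
the conjugate of the product comparison `L(Y × -) ⟶ L Y × L -`. -/
noncomputable def canonicalExpComparisonNatTrans (Y : E) : ihom (L.obj Y) ⋙ R ⟶ R ⋙ ihom Y :=
  conjugateEquiv (adj.comp (ihom.adjunction (L.obj Y))) ((ihom.adjunction Y).comp adj)
    (CartesianMonoidalCategory.prodComparisonNatTrans L Y)

lemma canonicalExpComparisonNatTrans_app (A : S) (Y : E) :
    (canonicalExpComparisonNatTrans R L adj Y).app A = canonicalExpComparison R L adj A Y := by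
  rw [canonicalExpComparisonNatTrans, conjugateEquiv_app_eq_homEquiv, Adjunction.comp_homEquiv,
    Adjunction.comp_counit_app, canonicalExpComparison, ← prodComparison_comp_whiskerLeft, assoc]
  rfl

instance isIso_canonicalExpComparisonNatTrans (Y : E)
    [∀ X, IsIso (CartesianMonoidalCategory.prodComparison L Y X)] :
    IsIso (canonicalExpComparisonNatTrans R L adj Y) :=
  conjugateEquiv_iso _ _ _

lemma canonicalExpComparisonNatTrans_comp_whiskerLeft_pre {Y Y' : E} (g : Y' ⟶ Y) :
    canonicalExpComparisonNatTrans R L adj Y ≫ Functor.whiskerLeft R (MonoidalClosed.pre g) =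
      Functor.whiskerRight (MonoidalClosed.pre (L.map g)) R ≫
        canonicalExpComparisonNatTrans R L adj Y' := by
  simp only [canonicalExpComparisonNatTrans, MonoidalClosed.pre]
  rw [← conjugateEquiv_whiskerRight _ _ adj, ← conjugateEquiv_whiskerLeft _ _ adj,
    conjugateEquiv_comp, conjugateEquiv_comp,
    whiskerRight_tensoringLeft_map_comp_prodComparisonNatTrans]

theorem canonicalExpComparison_isIso_and_natural_general
    [PreservesLimitsOfShape (Discrete WalkingPair) L] :
    (∀ (A : S) (Y : E), IsIso (canonicalExpComparison R L adj A Y)) ∧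
    (∀ (A A' : S) (f : A ⟶ A') (Y : E),
      canonicalExpComparison R L adj A Y ≫ (ihom Y).map (R.map f) =
        R.map ((ihom (L.obj Y)).map f) ≫ canonicalExpComparison R L adj A' Y) ∧
    (∀ (A : S) (Y Y' : E) (g : Y' ⟶ Y),
      canonicalExpComparison R L adj A Y ≫ (MonoidalClosed.pre g).app (R.obj A) =
        R.map ((MonoidalClosed.pre (L.map g)).app A) ≫ canonicalExpComparison R L adj A Y') := by
  simp only [← canonicalExpComparisonNatTrans_app]
  refine ⟨fun A Y => inferInstance, fun A A' f Y => ?_, fun A Y Y' g => ?_⟩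
  · exact ((canonicalExpComparisonNatTrans R L adj Y).naturality f).symm
  · exact NatTrans.congr_app (canonicalExpComparisonNatTrans_comp_whiskerLeft_pre R L adj g) A

end

/-- If `R : S ⥤ E` is full and faithful with a finite-product preserving left
adjoint `L : E ⥤ S` (both `E` and `S` cartesian closed with finite limits), then for every
`A` in `S` and `Y` in `E` the canonical morphism `R(A^{L Y}) ⟶ (R A)^Y` is an isomorphism,
naturally in both `A` and `Y`. -/
theorem canonicalExpComparison_isIso_and_natural
    {E : Type u} [Category.{v} E] [HasFiniteLimits E] [CartesianMonoidalCategory E]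
    [MonoidalClosed E]
    {S : Type u'} [Category.{v'} S] [HasFiniteLimits S] [CartesianMonoidalCategory S]
    [MonoidalClosed S]
    (R : S ⥤ E) [R.Full] [R.Faithful] (L : E ⥤ S) (adj : L ⊣ R)
    [PreservesFiniteProducts L] :
    (∀ (A : S) (Y : E), IsIso (canonicalExpComparison R L adj A Y)) ∧
    (∀ (A A' : S) (f : A ⟶ A') (Y : E),
      canonicalExpComparison R L adj A Y ≫ (ihom Y).map (R.map f) =
        R.map ((ihom (L.obj Y)).map f) ≫ canonicalExpComparison R L adj A' Y) ∧
    (∀ (A : S) (Y Y' : E) (g : Y' ⟶ Y),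
      canonicalExpComparison R L adj A Y ≫ (MonoidalClosed.pre g).app (R.obj A) =
        R.map ((MonoidalClosed.pre (L.map g)).app A) ≫ canonicalExpComparison R L adj A Y') := by
  exact canonicalExpComparison_isIso_and_natural_general R L adj
end

section
/- Let p : E → S be a pre-cohesive geometric morphism between elementary toposes, and let 2 denote the subobject classifier of S. Then for a morphism f : W → X in E the following are equivalent: (1) f is internally orthogonal to p^* 2, i.e., (p^* 2)^f is an isomorphism; (2) p_! f : p_! W → p_! X is an isomorphism in S; (3) for every object A of S, f is internally orthogonal to p^* A. -/
open CategoryTheory Category Limits MonoidalCategory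

universe u v u' v'

/-! The left adjoint `p_!` turns `f ▷ Y` into `p_! f ▷ p_! Y`, and every object of `S` is isomorphic
to some `p_! Y`, so `f` is internally orthogonal to `p^* A` precisely when `p_! f` is internally
orthogonal to `A`. Everything is thereby reduced to a statement about `g = p_! f` in `S`: it is
invertible as soon as it is internally orthogonal to the subobject classifier. Extending the
equality predicate of the domain of `g` along `g` shows that `g` is monic, comparing pulled back
equality predicates shows that it is epic, and a category with a subobject classifier is
balanced. -/

section InternallyOrthogonal

variable {C : Type*} [Category* C]

theorem isLocal_singleton_iff {X Y Z : C} {f : X ⟶ Y} :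
    (ObjectProperty.singleton Z).isLocal f ↔ Function.Bijective fun g : Y ⟶ Z ↦ f ≫ g :=
  ⟨fun h ↦ h Z ((ObjectProperty.singleton_iff Z Z).2 rfl),
    fun h _ hZ ↦ (ObjectProperty.singleton_iff _ _).1 hZ ▸ h⟩

theorem isLocal_singleton_map_iff {D : Type*} [Category* D] {L : C ⥤ D} {R : D ⥤ C}
    (adj : L ⊣ R) {X Y : C} (f : X ⟶ Y) (A : D) :
    (ObjectProperty.singleton A).isLocal (L.map f) ↔
      (ObjectProperty.singleton (R.obj A)).isLocal f := by
  have transpose_precomp : (fun g : Y ⟶ R.obj A ↦ f ≫ g) ∘ adj.homEquiv Y A =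
      adj.homEquiv X A ∘ fun g ↦ L.map f ≫ g :=
    funext fun g ↦ (adj.homEquiv_naturality_left f g).symm
  rw [isLocal_singleton_iff, isLocal_singleton_iff,
    ← Function.Bijective.of_comp_iff' (adj.homEquiv X A).bijective, ← transpose_precomp,
    Function.Bijective.of_comp_iff _ (adj.homEquiv Y A).bijective]

variable [MonoidalCategory C]

/-- Internal orthogonality of `f` to `Z`, phrased through generalized elements so that it makes
sense without internal homs: `f ▷ Y` is orthogonal to `Z` for every `Y`. -/
def InternallyOrthogonal {W X : C} (f : W ⟶ X) (Z : C) : Prop :=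
  ∀ Y : C, (ObjectProperty.singleton Z).isLocal (f ▷ Y)

theorem isIso_pre_app_iff_internallyOrthogonal [MonoidalClosed C] {W X : C} (f : W ⟶ X) (Z : C) :
    IsIso ((MonoidalClosed.pre f).app Z) ↔ InternallyOrthogonal f Z := by
  rw [isIso_iff_yoneda_map_bijective]
  refine forall_congr' fun Y ↦ ?_
  have curry_precomp : (fun h : Y ⟶ (ihom X).obj Z ↦ h ≫ (MonoidalClosed.pre f).app Z) ∘
      (ihom.adjunction X).homEquiv Y Z =
        (ihom.adjunction W).homEquiv Y Z ∘ fun h : X ⊗ Y ⟶ Z ↦ f ▷ Y ≫ h :=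
    funext fun h ↦ MonoidalClosed.curry_pre_app f h
  rw [isLocal_singleton_iff,
    ← Function.Bijective.of_comp_iff _ ((ihom.adjunction X).homEquiv Y Z).bijective, curry_precomp,
    Function.Bijective.of_comp_iff' ((ihom.adjunction W).homEquiv Y Z).bijective]

theorem internallyOrthogonal_of_isIso {W X : C} (f : W ⟶ X) [IsIso f] (Z : C) :
    InternallyOrthogonal f Z :=
  fun Y ↦ ObjectProperty.isLocal_of_isIso _ (f ▷ Y)

theorem internallyOrthogonal_map_iff {D : Type*} [Category* D] [MonoidalCategory D] {L : C ⥤ D}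
    [L.Monoidal] [L.EssSurj] {R : D ⥤ C} (adj : L ⊣ R) {W X : C} (f : W ⟶ X) (A : D) :
    InternallyOrthogonal (L.map f) A ↔ InternallyOrthogonal f (R.obj A) := by
  have isLocal_whiskerRight_iff (Y : C) :
      (ObjectProperty.singleton A).isLocal (L.map f ▷ L.obj Y) ↔
        (ObjectProperty.singleton (R.obj A)).isLocal (f ▷ Y) :=
    (MorphismProperty.arrow_mk_iso_iff _
      (Arrow.isoOfNatIso (Functor.Monoidal.commTensorRight L Y) (Arrow.mk f))).trans
        (isLocal_singleton_map_iff adj (f ▷ Y) A)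
  refine ⟨fun h Y ↦ (isLocal_whiskerRight_iff Y).1 (h (L.obj Y)), fun h B ↦ ?_⟩
  let tensorRightIso : tensorRight (L.obj (L.objPreimage B)) ≅ tensorRight B :=
    (tensoringRight D).mapIso (L.objObjPreimageIso B)
  exact (MorphismProperty.arrow_mk_iso_iff _
    (Arrow.isoOfNatIso tensorRightIso (Arrow.mk (L.map f)))).1
      ((isLocal_whiskerRight_iff _).2 (h (L.objPreimage B)))

end InternallyOrthogonal

section SubobjectClassifier

open CartesianMonoidalCategory

variable {C : Type*} [Category* C] [CartesianMonoidalCategory C] (c : Subobject.Classifier C)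

/-- The internal equality predicate on `X`: the characteristic map of the diagonal. -/
def equalityPredicate (X : C) : X ⊗ X ⟶ c.Ω :=
  c.χ (lift (𝟙 X) (𝟙 X))

theorem lift_equalityPredicate_eq_iff {T X : C} (a b : T ⟶ X) :
    lift a b ≫ equalityPredicate c X = c.χ₀ T ≫ c.truth ↔ a = b := by
  have diagonal_isPullback := c.isPullback (lift (𝟙 X) (𝟙 X))
  constructor
  · intro h
    obtain ⟨d, hd, -⟩ := diagonal_isPullback.exists_lift (lift a b) (c.χ₀ T) h
    rw [comp_lift, comp_id] at hd
    rw [← lift_fst a b, ← hd, lift_fst, ← lift_snd a b, ← hd, lift_snd]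
  · rintro rfl
    have lift_eq : lift a a = a ≫ lift (𝟙 X) (𝟙 X) := by simp
    rw [lift_eq, equalityPredicate, assoc, diagonal_isPullback.w, ← assoc,
      Subsingleton.elim (a ≫ c.χ₀ X) (c.χ₀ T)]

theorem lift_equalityPredicate_eq_lift_self_iff {T X : C} (a b : T ⟶ X) :
    lift a b ≫ equalityPredicate c X = lift b b ≫ equalityPredicate c X ↔ a = b := by
  rw [(lift_equalityPredicate_eq_iff c b b).2 rfl, lift_equalityPredicate_eq_iff]

variable {c} {A B : C} {g : A ⟶ B}

theorem mono_of_surjective_whiskerRight_comp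
    (h : Function.Surjective fun k : B ⊗ A ⟶ c.Ω ↦ g ▷ A ≫ k) : Mono g where
  right_cancellation {T} a b hab := by
    obtain ⟨k, hk : g ▷ A ≫ k = equalityPredicate c A⟩ := h (equalityPredicate c A)
    rw [← lift_equalityPredicate_eq_lift_self_iff c, ← hk, lift_whiskerRight_assoc,
      lift_whiskerRight_assoc, hab]

theorem epi_of_injective_whiskerRight_comp
    (h : ∀ Y : C, Function.Injective fun k : B ⊗ Y ⟶ c.Ω ↦ g ▷ Y ≫ k) : Epi g where
  left_cancellation {Y} a b hab := by
    have whiskerRight_eq : a ▷ Y ≫ equalityPredicate c Y = b ▷ Y ≫ equalityPredicate c Y :=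
      h Y (by simp only [← comp_whiskerRight_assoc, hab])
    rw [← lift_equalityPredicate_eq_lift_self_iff c]
    simpa using congrArg (lift (𝟙 B) b ≫ ·) whiskerRight_eq

theorem InternallyOrthogonal.isIso (h : InternallyOrthogonal g c.Ω) : IsIso g := by
  have bijective_precomp Y := isLocal_singleton_iff.1 (h Y)
  have : Mono g := mono_of_surjective_whiskerRight_comp (bijective_precomp A).surjective
  have : Epi g := epi_of_injective_whiskerRight_comp fun Y ↦ (bijective_precomp Y).injective
  have : HasSubobjectClassifier C := ⟨⟨c⟩⟩
  exact isIso_of_mono_of_epi g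

/-- A classifier whose truth map starts at the chosen terminal object, viewed as a classifier in
the sense of Mathlib, where the domain of truth is arbitrary. -/
noncomputable def Classifier.toSubobjectClassifier (c : _root_.Classifier C) :
    Subobject.Classifier C :=
  .mkOfTerminalΩ₀ (𝟙_ C) isTerminalTensorUnit c.Ω c.truth
    (fun m hm ↦ (c.classifies m hm).choose)
    (fun m hm ↦ (c.classifies m hm).choose_spec.1.flip)
    (fun m hm χ hχ ↦ (c.classifies m hm).choose_spec.2 χ hχ.flip)

end SubobjectClassifier

theorem precohesive_internallyOrthogonal_iff_general
    {E : Type*} [Category* E] [MonoidalCategory E] [MonoidalClosed E]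
    {S : Type*} [Category* S] [CartesianMonoidalCategory S] (c : Subobject.Classifier S)
    {L : E ⥤ S} {R : S ⥤ E} (adj : L ⊣ R) [L.Monoidal] [L.EssSurj] {W X : E} (f : W ⟶ X) :
    (IsIso ((MonoidalClosed.pre f).app (R.obj c.Ω)) ↔ IsIso (L.map f)) ∧
    (IsIso (L.map f) ↔ ∀ A : S, IsIso ((MonoidalClosed.pre f).app (R.obj A))) := by
  simp only [isIso_pre_app_iff_internallyOrthogonal, ← internallyOrthogonal_map_iff adj]
  have orthogonal_of_isIso (_ : IsIso (L.map f)) (A : S) : InternallyOrthogonal (L.map f) A :=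
    internallyOrthogonal_of_isIso (L.map f) A
  exact ⟨⟨fun h ↦ h.isIso, (orthogonal_of_isIso · c.Ω)⟩,
    ⟨orthogonal_of_isIso, fun h ↦ (h c.Ω).isIso⟩⟩

/-- Let `p : E ⟶ S` be a pre-cohesive geometric morphism between elementary
toposes, given by an adjoint string `p_! ⊣ p^* ⊣ p_* ⊣ p^!` with `p^*` finite-limit
preserving and fully faithful, the unit and counit of `p^* ⊣ p_*` monic, and `p_!`
finite-product preserving. Let `2 = cS.Ω` be the subobject classifier of `S`.  For
`f : W ⟶ X` in `E` the following are equivalent: (1) `f` is internally orthogonal to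
`p^* 2`; (2) `p_! f` is an isomorphism in `S`; (3) `f` is internally orthogonal to `p^* A`
for every `A` in `S`. -/
theorem precohesive_internallyOrthogonal_iff
    {E : Type u} [Category.{v} E] [HasFiniteLimits E] [CartesianMonoidalCategory E]
    [MonoidalClosed E] (cE : _root_.Classifier E)
    {S : Type u'} [Category.{v'} S] [HasFiniteLimits S] [CartesianMonoidalCategory S]
    [MonoidalClosed S] (cS : _root_.Classifier S)
    (pShriek : E ⥤ S) (pStar : S ⥤ E) (pLower : E ⥤ S) (pUpper : S ⥤ E)
    (adj₁ : pShriek ⊣ pStar) (adj₂ : pStar ⊣ pLower) (adj₃ : pLower ⊣ pUpper)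
    [PreservesFiniteLimits pStar] [pStar.Full] [pStar.Faithful]
    (hUnitMono : ∀ A : S, Mono (adj₂.unit.app A))
    (hCounitMono : ∀ X : E, Mono (adj₂.counit.app X))
    [PreservesFiniteProducts pShriek]
    {W X : E} (f : W ⟶ X) :
    (IsIso ((MonoidalClosed.pre f).app (pStar.obj cS.Ω)) ↔ IsIso (pShriek.map f)) ∧
    (IsIso (pShriek.map f) ↔ ∀ A : S, IsIso ((MonoidalClosed.pre f).app (pStar.obj A))) := by
  let _ : pShriek.Monoidal := .ofChosenFiniteProducts pShriek
  have : pShriek.EssSurj := ⟨fun A ↦ ⟨pStar.obj A, ⟨asIso (adj₁.counit.app A)⟩⟩⟩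
  exact precohesive_internallyOrthogonal_iff_general cS.toSubobjectClassifier adj₁ f
end

section
/- Let p : E → S be a hyperconnected geometric morphism between elementary toposes (p^* ⊣ p_*, p^* preserves finite limits, and the unit and counit of p^* ⊣ p_* are monomorphisms). Then for every monomorphism u : U → X in E, the naturality square of the counit β of p^* ⊣ p_*, with horizontal edges β_U : p^*(p_* U) → U and β_X : p^*(p_* X) → X and vertical edges p^*(p_* u) and u, is a pullback square. -/
open CategoryTheory Category Limits MonoidalCategory

universe u v u' v'

/-!
The maps at which the naturality square of the counit `β` is a pullback are stable under base
change, since `p_*` and `p^*` preserve pullbacks. Every monomorphism of `E` is a base change of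
`truth : 1 ⟶ Ω`, and the naturality square at `truth` is a pullback because `β_1` is an isomorphism
and `β_Ω` is a monomorphism.
-/

theorem isPullback_naturality_of_isPullback
    {C : Type u} [Category.{v} C] {D : Type u'} [Category.{v'} D] {F G : C ⥤ D} (α : F ⟶ G)
    {U X V Y : C} {f : U ⟶ V} {m : U ⟶ X} {n : V ⟶ Y} {g : X ⟶ Y}
    [PreservesLimit (cospan n g) F] [PreservesLimit (cospan n g) G]
    (base_change : IsPullback f m n g)
    (naturality : IsPullback (α.app V) (F.map n) (G.map n) (α.app Y)) :
    IsPullback (α.app U) (F.map m) (G.map m) (α.app X) := by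
  have outer : IsPullback (α.app U ≫ G.map f) (F.map m) (G.map n) (α.app X ≫ G.map g) := by
    simpa only [α.naturality] using (base_change.map F).paste_horiz naturality
  exact outer.of_right (α.naturality m).symm (base_change.map G)

section Adjunction

variable {E : Type u} [Category.{v} E] {S : Type u'} [Category.{v'} S]
  {L : S ⥤ E} {R : E ⥤ S} (adj : L ⊣ R)

theorem isIso_counit_app_of_isTerminal [PreservesLimit (Functor.empty.{0} S) L]
    {T : E} (hT : IsTerminal T) : IsIso (adj.counit.app T) :=
  have := adj.rightAdjoint_preservesLimits
  isIso_of_isTerminal ((hT.isTerminalObj R).isTerminalObj L) hT _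

theorem isPullback_counit_naturality_of_isTerminal [PreservesLimit (Functor.empty.{0} S) L]
    {T X : E} (hT : IsTerminal T) (x : T ⟶ X) [Mono (adj.counit.app X)] :
    IsPullback (adj.counit.app T) (L.map (R.map x)) x (adj.counit.app X) :=
  have := isIso_counit_app_of_isTerminal adj hT
  .of_horiz_isIso_mono ⟨(adj.counit.naturality x).symm⟩

theorem isPullback_counit_naturality_of_isPullback [PreservesLimitsOfShape WalkingCospan L]
    {U X V Y : E} {f : U ⟶ V} {m : U ⟶ X} {n : V ⟶ Y} {g : X ⟶ Y}
    (base_change : IsPullback f m n g)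
    (naturality : IsPullback (adj.counit.app V) (L.map (R.map n)) n (adj.counit.app Y)) :
    IsPullback (adj.counit.app U) (L.map (R.map m)) m (adj.counit.app X) :=
  have := adj.rightAdjoint_preservesLimits
  isPullback_naturality_of_isPullback adj.counit base_change naturality

end Adjunction

theorem hyperconnected_counit_naturality_isPullback_general
    {E : Type u} [Category.{v} E] [CartesianMonoidalCategory E] (cE : _root_.Classifier E)
    {S : Type u'} [Category.{v'} S] {pStar : S ⥤ E} {pLower : E ⥤ S} (adj : pStar ⊣ pLower)
    [PreservesFiniteLimits pStar] [Mono (adj.counit.app cE.Ω)] {U X : E} (u : U ⟶ X) [Mono u] :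
    IsPullback (adj.counit.app U) (pStar.map (pLower.map u)) u (adj.counit.app X) := by
  obtain ⟨χ, isPullback_truth, -⟩ := cE.classifies u inferInstance
  exact isPullback_counit_naturality_of_isPullback adj isPullback_truth
    (isPullback_counit_naturality_of_isTerminal adj
      CartesianMonoidalCategory.isTerminalTensorUnit cE.truth)

/-- Let `p : E ⟶ S` be a hyperconnected geometric morphism between elementary
toposes (`p^* ⊣ p_*`, `p^*` preserves finite limits, and the unit and counit of `p^* ⊣ p_*`
are monomorphisms).  Then for every monomorphism `u : U ⟶ X` in `E`, the naturality square
of the counit `β` of `p^* ⊣ p_*`, with horizontal edges `β_U : p^*(p_* U) ⟶ U` and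
`β_X : p^*(p_* X) ⟶ X` and vertical edges `p^*(p_* u)` and `u`, is a pullback square. -/
theorem hyperconnected_counit_naturality_isPullback
    {E : Type u} [Category.{v} E] [HasFiniteLimits E] [CartesianMonoidalCategory E]
    [MonoidalClosed E] (cE : _root_.Classifier E)
    {S : Type u'} [Category.{v'} S] [HasFiniteLimits S] [CartesianMonoidalCategory S]
    [MonoidalClosed S] (cS : _root_.Classifier S)
    (pStar : S ⥤ E) (pLower : E ⥤ S) (adj : pStar ⊣ pLower)
    [PreservesFiniteLimits pStar]
    (hUnitMono : ∀ A : S, Mono (adj.unit.app A))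
    (hCounitMono : ∀ X : E, Mono (adj.counit.app X))
    {U X : E} (u : U ⟶ X) (hu : Mono u) :
    IsPullback (adj.counit.app U) (pStar.map (pLower.map u)) u (adj.counit.app X) :=
  have := hCounitMono cE.Ω
  hyperconnected_counit_naturality_isPullback_general cE adj u
end

section
/- Let p : E → S be a pre-cohesive geometric morphism between elementary toposes, let 2 be the subobject classifier of S, and let F be the least subtopos of E containing p^* 2. Then for every object A of S, the object p^! A belongs to F (i.e., the reflection unit of F at p^! A is an isomorphism); in other words, F lies above the centre of p. -/
open CategoryTheory Category Limits MonoidalCategory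

universe u v u' v' u₂ v₂

/-! A subtopos `F` is determined by the class `W` of morphisms inverted by its reflector: an object
belongs to `F` iff it is `W`-local. Since `W` is stable under base change and `p_!` preserves
products, the `W`-locality of `p^* Ω` says that `p_!` of a morphism of `W` becomes bijective on maps
into `Ω` after multiplying by any object of `S`. As `Ω` classifies equality, `p_!` inverts `W`, so
every discrete object `p^* B` is `W`-local. It remains to see that `p_*` inverts `W` too, since
then every `p^! A` is `W`-local. For `f` in `W`, two maps from a discrete object into `X` that agree
after `f` agree on a `W`-dense part, and they factor through the subobject `p^* p_* X` of `X`, which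
is local; so `p_* f` is mono. Subobjects of discrete objects are discrete, hence the unit
`p^* B ⟶ p^! p_* p^* B`, whose kernel pair has equal projections after `p_*`, is mono. So `p_*` is
faithful on maps into a discrete object, and locality then makes `p_* f` epi. -/

namespace Classifier

/-- A classifier over the chosen terminal object `𝟙_ E`, as one of Mathlib's subobject classifiers;
the characteristic morphisms are chosen from the unique-existence clause. -/
noncomputable def toSubobjectClassifier_s11 {E : Type u} [Category.{v} E] [CartesianMonoidalCategory E]
    (c : _root_.Classifier E) : Subobject.Classifier E :=
  .mkOfTerminalΩ₀ (𝟙_ E) CartesianMonoidalCategory.isTerminalTensorUnit c.Ω c.truth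
    (fun m hm => (c.classifies m hm).choose)
    (fun m hm => (c.classifies m hm).choose_spec.1.flip)
    (fun m hm χ' hχ' => (c.classifies m hm).choose_spec.2 χ' hχ'.flip)

end Classifier

namespace PreCohesive

open CartesianMonoidalCategory

section Local

variable {C : Type u} [Category.{v} C] {D : Type u'} [Category.{v'} D]

theorem bijective_map_comp_iff {G : C ⥤ D} {H : D ⥤ C} (adj : G ⊣ H) {X Y : C} (f : X ⟶ Y) (A : D) :
    Function.Bijective (fun g : G.obj Y ⟶ A => G.map f ≫ g) ↔
      Function.Bijective (fun g : Y ⟶ H.obj A => f ≫ g) := by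
  have transpose_comp : (fun g : Y ⟶ H.obj A => f ≫ g) ∘ adj.homEquiv Y A =
      adj.homEquiv X A ∘ fun g => G.map f ≫ g :=
    funext fun g => (adj.homEquiv_naturality_left f g).symm
  rw [← Function.Bijective.of_comp_iff _ (adj.homEquiv Y A).bijective, transpose_comp,
    Function.Bijective.of_comp_iff' (adj.homEquiv X A).bijective]

theorem isLocal_obj_of_isInvertedBy {G : C ⥤ D} {H : D ⥤ C} (adj : G ⊣ H)
    {W : MorphismProperty C} (hW : W.IsInvertedBy G) (A : D) : W.isLocal (H.obj A) := by
  intro X Y f hf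
  have := hW f hf
  exact (bijective_map_comp_iff adj f A).1 (ObjectProperty.isLocal_of_isIso ⊤ (G.map f) A trivial)

theorem isIso_unit_app_iff_isLocal {L : C ⥤ D} {i : D ⥤ C} [i.Full] [i.Faithful] (adj : L ⊣ i)
    {Z : C} :
    IsIso (adj.unit.app Z) ↔ ((MorphismProperty.isomorphisms D).inverseImage L).isLocal Z := by
  set W := (MorphismProperty.isomorphisms D).inverseImage L
  have reflection_isLocal : W.isLocal (i.obj (L.obj Z)) :=
    isLocal_obj_of_isInvertedBy adj (fun _ _ _ hf => hf) (L.obj Z)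
  refine ⟨fun _ => W.isLocal.prop_of_iso (asIso (adj.unit.app Z)).symm reflection_isLocal,
    fun hZ => ?_⟩
  have unit_mem : W (adj.unit.app Z) := inferInstanceAs (IsIso (L.map (adj.unit.app Z)))
  exact (W.isLocal.isLocal_iff_isIso _ hZ reflection_isLocal).1 (W.le_isLocal_isLocal _ unit_mem)

instance isStableUnderBaseChange_inverseImage (P : MorphismProperty D) [P.IsStableUnderBaseChange]
    (L : C ⥤ D) [PreservesLimitsOfShape WalkingCospan L] :
    (P.inverseImage L).IsStableUnderBaseChange where
  of_isPullback sq hg := P.of_isPullback (sq.map L) hg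

instance hasOfPostcompProperty_inverseImage (P Q : MorphismProperty D) [P.HasOfPostcompProperty Q]
    (L : C ⥤ D) : (P.inverseImage L).HasOfPostcompProperty (Q.inverseImage L) where
  of_postcomp f g hg hfg := P.of_postcomp (L.map f) (L.map g) hg (by simpa using hfg)

theorem exists_mem_comp_eq_of_comp_eq [HasPullbacks C] {W : MorphismProperty C}
    [W.IsStableUnderBaseChange] [W.HasOfPostcompProperty W] [W.ContainsIdentities]
    {X Y : C} {f : X ⟶ Y} (hf : W f) {T : C} {a b : T ⟶ X} (hab : a ≫ f = b ≫ f) :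
    ∃ (U : C) (d : U ⟶ T), W d ∧ d ≫ a = d ≫ b := by
  have diagonal_mem : W (pullback.diagonal f) :=
    W.of_postcomp _ (pullback.fst f f) (W.pullback_fst f f hf) (by simpa using W.id_mem X)
  let k : T ⟶ pullback f f := pullback.lift a b hab
  refine ⟨_, pullback.fst k (pullback.diagonal f), W.pullback_fst _ _ diagonal_mem, ?_⟩
  calc pullback.fst k (pullback.diagonal f) ≫ a
      = pullback.fst k (pullback.diagonal f) ≫ k ≫ pullback.fst f f := by
        rw [pullback.lift_fst]
    _ = pullback.fst k (pullback.diagonal f) ≫ k ≫ pullback.snd f f := by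
        simp [pullback.condition_assoc]
    _ = pullback.fst k (pullback.diagonal f) ≫ b := by rw [pullback.lift_snd]

end Local

section ProductFrobenius

variable {C : Type u} [Category.{v} C] [CartesianMonoidalCategory C]
  {D : Type u'} [Category.{v'} D] [CartesianMonoidalCategory D]

theorem isPullback_snd_whiskerLeft (Z : C) {X Y : C} (f : X ⟶ Y) :
    IsPullback (snd Z X) (Z ◁ f) f (snd Z Y) where
  w := by simp
  isLimit' := ⟨PullbackCone.IsLimit.mk _ (fun s => lift (s.snd ≫ fst Z Y) s.fst)
    (fun s => by simp)
    (fun s => by ext <;> simp [s.condition])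
    (fun s m hfst hsnd => by ext <;> simp [← hfst, ← hsnd])⟩

variable {G : C ⥤ D} {H : D ⥤ C} [H.Full] [H.Faithful]
  [PreservesLimitsOfShape (Discrete WalkingPair) G]

/-- Frobenius reciprocity for a product-preserving reflector. Mathlib's `frobeniusMorphism` requires
both categories to have their morphisms in the same universe. -/
noncomputable def frobeniusIso (adj : G ⊣ H) (B : D) (X : C) :
    G.obj (H.obj B ⊗ X) ≅ B ⊗ G.obj X :=
  prodComparisonIso G (H.obj B) X ≪≫ whiskerRightIso (asIso (adj.counit.app B)) (G.obj X)

theorem frobeniusIso_hom_naturality (adj : G ⊣ H) (B : D) {X Y : C} (f : X ⟶ Y) :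
    (frobeniusIso adj B X).hom ≫ (B ◁ G.map f) =
      G.map (H.obj B ◁ f) ≫ (frobeniusIso adj B Y).hom := by
  simp [frobeniusIso, prodComparison_natural_whiskerLeft_assoc, whisker_exchange]

theorem bijective_whiskerLeft_map_comp (adj : G ⊣ H) {W : MorphismProperty C}
    [W.IsStableUnderBaseChange] {A : D} (hA : W.isLocal (H.obj A)) {X Y : C} {f : X ⟶ Y}
    (hf : W f) (B : D) :
    Function.Bijective (fun g : B ⊗ G.obj Y ⟶ A => (B ◁ G.map f) ≫ g) := by
  have whisker_mem : W (H.obj B ◁ f) := W.of_isPullback (isPullback_snd_whiskerLeft _ f) hf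
  have map_whisker_isLocal : (ObjectProperty.singleton A).isLocal (G.map (H.obj B ◁ f)) := by
    rintro _ ⟨⟩
    exact (bijective_map_comp_iff adj _ A).2 (hA _ whisker_mem)
  have whisker_map_isLocal : (ObjectProperty.singleton A).isLocal (B ◁ G.map f) :=
    (MorphismProperty.arrow_mk_iso_iff _ (Arrow.isoMk (frobeniusIso adj B X) (frobeniusIso adj B Y)
      (frobeniusIso_hom_naturality adj B f))).1 map_whisker_isLocal
  exact whisker_map_isLocal A ⟨⟨⟩⟩

end ProductFrobenius

section SubobjectClassifier

variable {S : Type u} [Category.{v} S]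

theorem balanced_of_classifier (c : Subobject.Classifier S) : Balanced S :=
  have : HasSubobjectClassifier S := ⟨⟨c⟩⟩
  inferInstance

variable [CartesianMonoidalCategory S] (c : Subobject.Classifier S)

instance mono_lift_id_id (A : S) : Mono (lift (𝟙 A) (𝟙 A)) :=
  mono_of_mono_fac (lift_fst (𝟙 A) (𝟙 A))

/-- The equality predicate on `A`, i.e. the characteristic morphism of the diagonal. -/
def equalityPredicate (A : S) : A ⊗ A ⟶ c.Ω :=
  c.χ (lift (𝟙 A) (𝟙 A))

theorem lift_comp_equalityPredicate_eq_truth_iff {T A : S} (a b : T ⟶ A) :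
    lift a b ≫ equalityPredicate c A = c.χ₀ T ≫ c.truth ↔ a = b := by
  have diagonal_isPullback := c.isPullback (lift (𝟙 A) (𝟙 A))
  refine ⟨fun h => ?_, ?_⟩
  · have factors := diagonal_isPullback.lift_fst _ _ h
    simp only [comp_lift, comp_id] at factors
    have hfst := congrArg (· ≫ fst A A) factors
    have hsnd := congrArg (· ≫ snd A A) factors
    simp only [lift_fst, lift_snd] at hfst hsnd
    exact hfst.symm.trans hsnd
  · rintro rfl
    calc lift a a ≫ equalityPredicate c A
        = a ≫ lift (𝟙 A) (𝟙 A) ≫ equalityPredicate c A := by rw [comp_lift_assoc, comp_id]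
      _ = a ≫ c.χ₀ A ≫ c.truth := by rw [equalityPredicate, diagonal_isPullback.w]
      _ = c.χ₀ T ≫ c.truth := by rw [← assoc, Subsingleton.elim (a ≫ c.χ₀ A) (c.χ₀ T)]

theorem mono_of_surjective_whiskerLeft_comp {M N : S} (g : M ⟶ N)
    (hg : Function.Surjective (fun h : M ⊗ N ⟶ c.Ω => (M ◁ g) ≫ h)) : Mono g := by
  obtain ⟨h, hh⟩ := hg (equalityPredicate c M)
  refine ⟨fun {T} a b hab => ?_⟩
  rw [← lift_comp_equalityPredicate_eq_truth_iff c]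
  calc lift a b ≫ equalityPredicate c M
      = lift a (b ≫ g) ≫ h := by simp [← hh]
    _ = lift a a ≫ equalityPredicate c M := by simp [← hh, hab]
    _ = c.χ₀ T ≫ c.truth := (lift_comp_equalityPredicate_eq_truth_iff c a a).2 rfl

theorem epi_of_injective_whiskerLeft_comp {M N : S} (g : M ⟶ N)
    (hg : ∀ B : S, Function.Injective (fun h : B ⊗ N ⟶ c.Ω => (B ◁ g) ≫ h)) : Epi g := by
  refine ⟨fun {B} a b hab => ?_⟩
  have predicates_eq : (B ◁ a) ≫ equalityPredicate c B = (B ◁ b) ≫ equalityPredicate c B :=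
    hg B (by simp only [← whiskerLeft_comp_assoc, hab])
  rw [← lift_comp_equalityPredicate_eq_truth_iff c]
  calc lift a b ≫ equalityPredicate c B
      = lift a (𝟙 N) ≫ (B ◁ b) ≫ equalityPredicate c B := by simp
    _ = lift a (𝟙 N) ≫ (B ◁ a) ≫ equalityPredicate c B := by rw [predicates_eq]
    _ = lift a a ≫ equalityPredicate c B := by simp
    _ = c.χ₀ N ≫ c.truth := (lift_comp_equalityPredicate_eq_truth_iff c a a).2 rfl

theorem isInvertedBy_of_isLocal_obj_classifier {C : Type u'} [Category.{v'} C]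
    [CartesianMonoidalCategory C] {G : C ⥤ S} {H : S ⥤ C} (adj : G ⊣ H) [H.Full] [H.Faithful]
    [PreservesLimitsOfShape (Discrete WalkingPair) G] {W : MorphismProperty C}
    [W.IsStableUnderBaseChange] (hΩ : W.isLocal (H.obj c.Ω)) : W.IsInvertedBy G := by
  intro X Y f hf
  have whisker_bijective := bijective_whiskerLeft_map_comp adj hΩ hf
  have := balanced_of_classifier c
  have := mono_of_surjective_whiskerLeft_comp c (G.map f) (whisker_bijective _).surjective
  have := epi_of_injective_whiskerLeft_comp c (G.map f) fun B => (whisker_bijective B).injective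
  exact isIso_of_mono_of_epi _

end SubobjectClassifier

section Discrete

variable {E : Type u} [Category.{v} E] {S : Type u'} [Category.{v'} S]
  {pStar : S ⥤ E} {pLower : E ⥤ S} {pUpper : S ⥤ E}

theorem isIso_counit_app_of_isTerminal (adj : pStar ⊣ pLower)
    [PreservesLimit (Functor.empty.{0} S) pStar] {T : E} (hT : IsTerminal T) :
    IsIso (adj.counit.app T) :=
  have := adj.rightAdjoint_preservesLimits
  isIso_of_isTerminal ((hT.isTerminalObj pLower).isTerminalObj pStar) hT _

theorem isIso_counit_app_of_mono (c : Subobject.Classifier E) (adj : pStar ⊣ pLower)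
    [PreservesFiniteLimits pStar] (hmono : ∀ X : E, Mono (adj.counit.app X))
    {U V : E} (m : U ⟶ V) [Mono m] [IsIso (adj.counit.app V)] : IsIso (adj.counit.app U) := by
  have := adj.rightAdjoint_preservesLimits
  have := isIso_counit_app_of_isTerminal adj c.isTerminalΩ₀
  have := hmono c.Ω
  have := hmono U
  have coreflected := ((c.isPullback m).map pLower).map pStar
  have compatible : (m ≫ inv (adj.counit.app V)) ≫ pStar.map (pLower.map (c.χ m)) =
      (c.χ₀ U ≫ inv (adj.counit.app c.Ω₀)) ≫ pStar.map (pLower.map c.truth) := by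
    rw [← cancel_mono (adj.counit.app c.Ω)]
    simp [(c.isPullback m).w]
  have section_counit : coreflected.lift _ _ compatible ≫ adj.counit.app U = 𝟙 U := by
    rw [← cancel_mono m, assoc, ← adj.counit_naturality, coreflected.lift_fst_assoc]
    simp
  have : IsSplitEpi (adj.counit.app U) := ⟨⟨⟨_, section_counit⟩⟩⟩
  exact isIso_of_mono_of_isSplitEpi _

variable [CartesianMonoidalCategory E] [CartesianMonoidalCategory S]

theorem mono_unit_app_pStar_obj [HasPullbacks E] (c : Subobject.Classifier E)
    (adj₂ : pStar ⊣ pLower) (adj₃ : pLower ⊣ pUpper) [PreservesFiniteLimits pStar]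
    [pStar.Full] [pStar.Faithful] (hmono : ∀ X : E, Mono (adj₂.counit.app X)) (A : S) :
    Mono (adj₃.unit.app (pStar.obj A)) := by
  let φ : pStar.obj A ⟶ pUpper.obj (pLower.obj (pStar.obj A)) := adj₃.unit.app (pStar.obj A)
  have := adj₂.isIso_counit_app_of_iso (prodComparisonIso pStar A A).symm
  have : Mono (lift (pullback.fst φ φ) (pullback.snd φ φ)) :=
    ⟨fun a b hab => pullback.hom_ext (by simpa using congrArg (· ≫ fst _ _) hab)
      (by simpa using congrArg (· ≫ snd _ _) hab)⟩
  have := isIso_counit_app_of_mono c adj₂ hmono (lift (pullback.fst φ φ) (pullback.snd φ φ))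
  have : Mono (pLower.map φ) := mono_of_mono_fac (adj₃.left_triangle_components _)
  have map_projections_eq : pLower.map (pullback.fst φ φ) = pLower.map (pullback.snd φ φ) := by
    rw [← cancel_mono (pLower.map φ), ← pLower.map_comp, ← pLower.map_comp, pullback.condition]
  have projections_eq : pullback.fst φ φ = pullback.snd φ φ := by
    rw [← cancel_epi (adj₂.counit.app (pullback φ φ))]
    calc adj₂.counit.app (pullback φ φ) ≫ pullback.fst φ φ
        = pStar.map (pLower.map (pullback.fst φ φ)) ≫ adj₂.counit.app (pStar.obj A) :=
          (adj₂.counit_naturality _).symm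
      _ = pStar.map (pLower.map (pullback.snd φ φ)) ≫ adj₂.counit.app (pStar.obj A) := by
          rw [map_projections_eq]
      _ = adj₂.counit.app (pullback φ φ) ≫ pullback.snd φ φ := adj₂.counit_naturality _
  exact IsKernelPair.mono_of_eq_fst_snd (IsPullback.of_hasPullback φ φ) projections_eq

theorem pLower_map_injective [HasPullbacks E] (c : Subobject.Classifier E)
    (adj₂ : pStar ⊣ pLower) (adj₃ : pLower ⊣ pUpper) [PreservesFiniteLimits pStar]
    [pStar.Full] [pStar.Faithful] (hmono : ∀ X : E, Mono (adj₂.counit.app X)) (X : E) (A : S) :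
    Function.Injective (fun g : X ⟶ pStar.obj A => pLower.map g) := by
  intro g h (hgh : pLower.map g = pLower.map h)
  have := mono_unit_app_pStar_obj c adj₂ adj₃ hmono A
  refine (cancel_mono (adj₃.unit.app (pStar.obj A))).1 ?_
  calc g ≫ adj₃.unit.app (pStar.obj A)
      = adj₃.unit.app X ≫ pUpper.map (pLower.map g) := (adj₃.unit_naturality g).symm
    _ = adj₃.unit.app X ≫ pUpper.map (pLower.map h) := by rw [hgh]
    _ = h ≫ adj₃.unit.app (pStar.obj A) := adj₃.unit_naturality h

end Discrete

section Inverts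

variable {E : Type u} [Category.{v} E] [HasPullbacks E] {S : Type u'} [Category.{v'} S]
  {pStar : S ⥤ E} {pLower : E ⥤ S} {pUpper : S ⥤ E} {W : MorphismProperty E}
  [W.IsStableUnderBaseChange]

theorem mono_pLower_map [W.HasOfPostcompProperty W] [W.ContainsIdentities] (adj : pStar ⊣ pLower)
    [pStar.Faithful] (hmono : ∀ X : E, Mono (adj.counit.app X))
    (hlocal : ∀ A : S, W.isLocal (pStar.obj A)) {X Y : E} {f : X ⟶ Y} (hf : W f) :
    Mono (pLower.map f) := by
  refine ⟨fun {T} a b hab => ?_⟩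
  have transposes_comp :
      (adj.homEquiv T X).symm a ≫ f = (adj.homEquiv T X).symm b ≫ f := by
    rw [← adj.homEquiv_naturality_right_symm, hab, adj.homEquiv_naturality_right_symm]
  obtain ⟨U, d, hd, hdab⟩ := exists_mem_comp_eq_of_comp_eq hf transposes_comp
  have := hmono X
  have agree_on_dense : d ≫ pStar.map a = d ≫ pStar.map b := by
    simpa only [adj.homEquiv_counit, ← assoc, cancel_mono] using hdab
  exact pStar.map_injective ((hlocal _ d hd).injective agree_on_dense)

theorem epi_pLower_map (adj : pStar ⊣ pLower) [pStar.Full] [pStar.Faithful]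
    (hinj : ∀ (X : E) (A : S), Function.Injective (fun g : X ⟶ pStar.obj A => pLower.map g))
    (hlocal : ∀ A : S, W.isLocal (pStar.obj A)) {X Y : E} {f : X ⟶ Y} (hf : W f) :
    Epi (pLower.map f) := by
  refine ⟨fun {B} u v huv => ?_⟩
  let f' := pullback.snd f (adj.counit.app Y)
  have hf' : W f' := W.pullback_snd _ _ hf
  have map_counit_unit : pLower.map (adj.counit.app Y) ≫ adj.unit.app (pLower.obj Y) = 𝟙 _ := by
    simp [← cancel_epi (adj.unit.app (pLower.obj Y))]
  have map_comp (w : pLower.obj Y ⟶ B) : pLower.map (f' ≫ pStar.map w) =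
      pLower.map (pullback.fst f (adj.counit.app Y)) ≫ pLower.map f ≫ w ≫ adj.unit.app B := by
    calc pLower.map (f' ≫ pStar.map w)
        = pLower.map f' ≫ (pLower.map (adj.counit.app Y) ≫ adj.unit.app (pLower.obj Y)) ≫
            pLower.map (pStar.map w) := by rw [map_counit_unit, id_comp, pLower.map_comp]
      _ = pLower.map (f' ≫ adj.counit.app Y) ≫ w ≫ adj.unit.app B := by simp
      _ = _ := by rw [← pullback.condition, pLower.map_comp, assoc]
  have agree_on_dense : f' ≫ pStar.map u = f' ≫ pStar.map v :=
    hinj _ _ (by simp only [map_comp, reassoc_of% huv])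
  exact pStar.map_injective ((hlocal _ f' hf').injective agree_on_dense)

theorem isInvertedBy_pLower [CartesianMonoidalCategory E] [CartesianMonoidalCategory S] [Balanced S]
    (c : Subobject.Classifier E) (adj₂ : pStar ⊣ pLower) (adj₃ : pLower ⊣ pUpper)
    [PreservesFiniteLimits pStar] [pStar.Full] [pStar.Faithful]
    (hmono : ∀ X : E, Mono (adj₂.counit.app X)) [W.HasOfPostcompProperty W] [W.ContainsIdentities]
    (hlocal : ∀ A : S, W.isLocal (pStar.obj A)) : W.IsInvertedBy pLower := by
  intro X Y f hf
  have := mono_pLower_map adj₂ hmono hlocal hf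
  have := epi_pLower_map adj₂ (pLower_map_injective c adj₂ adj₃ hmono) hlocal hf
  exact isIso_of_mono_of_epi _

end Inverts

end PreCohesive

open PreCohesive in
theorem least_subtopos_contains_pUpper_general
    {E : Type u} [Category.{v} E] [HasFiniteLimits E] [CartesianMonoidalCategory E]
    (cE : _root_.Classifier E)
    {S : Type u'} [Category.{v'} S] [CartesianMonoidalCategory S] (cS : _root_.Classifier S)
    {pShriek : E ⥤ S} {pStar : S ⥤ E} {pLower : E ⥤ S} {pUpper : S ⥤ E}
    (adj₁ : pShriek ⊣ pStar) (adj₂ : pStar ⊣ pLower) (adj₃ : pLower ⊣ pUpper)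
    [PreservesFiniteLimits pStar] [pStar.Full] [pStar.Faithful]
    (hCounitMono : ∀ X : E, Mono (adj₂.counit.app X))
    [PreservesFiniteProducts pShriek]
    {F : Type u₂} [Category.{v₂} F] {iF : F ⥤ E} [iF.Full] [iF.Faithful]
    {LF : E ⥤ F} (adjF : LF ⊣ iF) [PreservesFiniteLimits LF]
    (hZ : IsIso (adjF.unit.app (pStar.obj cS.Ω))) (A : S) :
    IsIso (adjF.unit.app (pUpper.obj A)) := by
  let W := (MorphismProperty.isomorphisms F).inverseImage LF
  have hΩ : W.isLocal (pStar.obj cS.Ω) := (isIso_unit_app_iff_isLocal adjF).1 hZ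
  have hShriek : W.IsInvertedBy pShriek :=
    isInvertedBy_of_isLocal_obj_classifier cS.toSubobjectClassifier_s11 adj₁ hΩ
  have hDiscrete : ∀ B : S, W.isLocal (pStar.obj B) := isLocal_obj_of_isInvertedBy adj₁ hShriek
  have := balanced_of_classifier cS.toSubobjectClassifier_s11
  have hLower : W.IsInvertedBy pLower :=
    isInvertedBy_pLower cE.toSubobjectClassifier_s11 adj₂ adj₃ hCounitMono hDiscrete
  exact (isIso_unit_app_iff_isLocal adjF).2 (isLocal_obj_of_isInvertedBy adj₃ hLower A)

/-- Let `p : E ⟶ S` be a pre-cohesive geometric morphism between elementary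
toposes, `2 = cS.Ω` the subobject classifier of `S`, and `F` (inclusion `iF`, reflector
`LF ⊣ iF` preserving finite limits) the least subtopos of `E` containing `p^* 2`.  Then for
every object `A` of `S`, the object `p^! A` belongs to `F`, i.e. the reflection unit of `F`
at `p^! A` is an isomorphism; in other words `F` lies above the centre of `p`. -/
theorem least_subtopos_contains_pUpper
    {E : Type u} [Category.{v} E] [HasFiniteLimits E] [CartesianMonoidalCategory E]
    [MonoidalClosed E] (cE : _root_.Classifier E)
    {S : Type u'} [Category.{v'} S] [HasFiniteLimits S] [CartesianMonoidalCategory S]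
    [MonoidalClosed S] (cS : _root_.Classifier S)
    (pShriek : E ⥤ S) (pStar : S ⥤ E) (pLower : E ⥤ S) (pUpper : S ⥤ E)
    (adj₁ : pShriek ⊣ pStar) (adj₂ : pStar ⊣ pLower) (adj₃ : pLower ⊣ pUpper)
    [PreservesFiniteLimits pStar] [pStar.Full] [pStar.Faithful]
    (hUnitMono : ∀ A : S, Mono (adj₂.unit.app A))
    (hCounitMono : ∀ X : E, Mono (adj₂.counit.app X))
    [PreservesFiniteProducts pShriek]
    {F : Type u₂} [Category.{v₂} F] (iF : F ⥤ E) [iF.Full] [iF.Faithful]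
    (LF : E ⥤ F) (adjF : LF ⊣ iF) [PreservesFiniteLimits LF]
    (hZ : IsIso (adjF.unit.app (pStar.obj cS.Ω)))
    (hleast : ∀ {F' : Type u₂} [Category.{v₂} F'] (i' : F' ⥤ E), i'.Full → i'.Faithful →
      ∀ (L' : E ⥤ F') (adj' : L' ⊣ i'), PreservesFiniteLimits L' →
      IsIso (adj'.unit.app (pStar.obj cS.Ω)) →
      ∀ X : E, IsIso (adjF.unit.app X) → IsIso (adj'.unit.app X))
    (A : S) :
    IsIso (adjF.unit.app (pUpper.obj A)) := by
  exact least_subtopos_contains_pUpper_general cE cS adj₁ adj₂ adj₃ hCounitMono adjF hZ A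
end

section
/- Let p : E → S be a pre-cohesive geometric morphism between elementary toposes, let 2 be the subobject classifier of S, and let F be the least subtopos of E containing p^* 2. Then F is the least subtopos of E containing both subcategories p^* : S → E and p^! : S → E; that is, for every object A of S both p^* A and p^! A belong to F, and every subtopos G of E such that p^* A and p^! A belong to G for all objects A of S contains F. -/
open CategoryTheory Category Limits MonoidalCategory

universe u v u' v' u₂ v₂

/-!
An object belongs to a subtopos iff it is orthogonal to the maps inverted by the reflector, so
membership can be transposed along adjunctions.

A map `f` is orthogonal to `p^* (Ω ^ A)` iff `p^* A × f` is orthogonal to `p^* Ω`, because `p_!`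
preserves products. Inverted maps are stable under `p^* A × -`, and `A` is the pullback of
`true : 1 ⟶ Ω` along the classifying map of the singleton `A ⟶ Ω ^ A`; hence `p^* Ω ∈ F` forces
`p^* A ∈ F`.

For `p^! A` it is enough to test orthogonality against inverted monomorphisms `m`, and so to show
that `p_* m` is invertible. The pullback of `m` along the counit `p^* p_* Y ⟶ Y` is an inverted
subobject of a discrete object. As the counit at `Ω` is monic, such a subobject is a pullback of
discrete objects, so it lies in `F` and is the whole of `p^* p_* Y`. Thus the counit factors
through `m`.
-/

section Orthogonality

variable {C : Type u} [Category.{v} C] {D : Type u'} [Category.{v'} D]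

lemma bijective_comp_obj_iff {L : C ⥤ D} {R : D ⥤ C} (adj : L ⊣ R) {X Y : C} (f : X ⟶ Y) (Z : D) :
    Function.Bijective (fun g : Y ⟶ R.obj Z => f ≫ g) ↔
      Function.Bijective (fun g : L.obj Y ⟶ Z => L.map f ≫ g) := by
  have naturality : (fun g : Y ⟶ R.obj Z => f ≫ g) ∘ adj.homEquiv Y Z =
      adj.homEquiv X Z ∘ fun g : L.obj Y ⟶ Z => L.map f ≫ g :=
    funext fun g => (adj.homEquiv_naturality_left f g).symm
  rw [← Function.Bijective.of_comp_iff _ (adj.homEquiv Y Z).bijective, naturality,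
    Function.Bijective.of_comp_iff' (adj.homEquiv X Z).bijective]

lemma isIso_map_of_counit_factors {L : C ⥤ D} {R : D ⥤ C} (adj : L ⊣ R) [L.Full] [L.Faithful]
    {X Y : D} {m : X ⟶ Y} [Mono m] {s : L.obj (R.obj Y) ⟶ X} (hs : s ≫ m = adj.counit.app Y) :
    IsIso (R.map m) := by
  have := adj.rightAdjoint_preservesLimits
  have : IsIso (R.map s ≫ R.map m) := by
    rw [← R.map_comp, hs]
    infer_instance
  have : IsSplitEpi (R.map m) :=
    ⟨⟨⟨inv (R.map s ≫ R.map m) ≫ R.map s, by rw [Category.assoc, IsIso.inv_hom_id]⟩⟩⟩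
  exact isIso_of_mono_of_isSplitEpi _

lemma prop_of_isPullback {P : ObjectProperty C} [P.IsClosedUnderLimitsOfShape WalkingCospan]
    {W X Y Z : C} {fst : W ⟶ X} {snd : W ⟶ Y} {f : X ⟶ Z} {g : Y ⟶ Z}
    (sq : IsPullback fst snd f g) (hX : P X) (hY : P Y) (hZ : P Z) : P W :=
  P.prop_of_isLimit sq.isLimit (by rintro (_ | _ | _) <;> assumption)

instance isStableUnderBaseChange_inverseImage (P : MorphismProperty D) [P.IsStableUnderBaseChange]
    (L : C ⥤ D) [PreservesLimitsOfShape WalkingCospan L] :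
    (P.inverseImage L).IsStableUnderBaseChange where
  of_isPullback sq hg := P.of_isPullback (sq.map L) hg

lemma isIso_of_isLocal_inf_monomorphisms [HasPullbacks C] {W : MorphismProperty C}
    [W.IsStableUnderBaseChange] [W.HasTwoOutOfThreeProperty] [W.ContainsIdentities]
    {Z T : C} {η : Z ⟶ T} (hη : W η)
    (hZ : (W ⊓ MorphismProperty.monomorphisms C).isLocal Z) (hT : W.isLocal T) : IsIso η := by
  -- Orthogonality of `Z` to the diagonal of `η` identifies the two projections of the kernel pair,
  -- so `η` is itself a monomorphism in `W`.
  have diagonal_mem : W (pullback.diagonal η) :=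
    W.of_postcomp _ (pullback.fst η η) (W.pullback_fst η η hη)
      (by simpa only [pullback.diagonal_fst] using W.id_mem Z)
  have fst_eq_snd : pullback.fst η η = pullback.snd η η :=
    (hZ (pullback.diagonal η) ⟨diagonal_mem, inferInstance⟩).1 (by simp)
  have : Mono η := (pullback.diagonal_isKernelPair η).mono_of_eq_fst_snd fst_eq_snd
  exact ((W ⊓ MorphismProperty.monomorphisms C).isLocal.isLocal_iff_isIso η hZ
    (MorphismProperty.isLocal_antitone inf_le_left _ hT)).1
      (MorphismProperty.le_isLocal_isLocal _ _ ⟨hη, this⟩)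

end Orthogonality

section Reflector

variable {C : Type u} [Category.{v} C] {D : Type u'} [Category.{v'} D] {L : C ⥤ D} {R : D ⥤ C}

/-- The maps inverted by `L`; when `L` is the reflector of a subtopos these are the bidense maps
of the corresponding Lawvere–Tierney topology. -/
abbrev invertedMaps (L : C ⥤ D) : MorphismProperty C :=
  (MorphismProperty.isomorphisms D).inverseImage L

variable [R.Full] [R.Faithful]

lemma isLocal_invertedMaps_obj (adj : L ⊣ R) (Y : D) : (invertedMaps L).isLocal (R.obj Y) := by
  rw [invertedMaps, ← ObjectProperty.isLocal_eq_inverseImage_isomorphisms adj]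
  exact ObjectProperty.le_isLocal_isLocal _ _ ⟨Y, rfl⟩

lemma unit_app_mem_invertedMaps (adj : L ⊣ R) (X : C) : invertedMaps L (adj.unit.app X) :=
  inferInstanceAs (IsIso (L.map (adj.unit.app X)))

lemma isIso_unit_app_iff_isLocal (adj : L ⊣ R) (Z : C) :
    IsIso (adj.unit.app Z) ↔ (invertedMaps L).isLocal Z := by
  constructor
  · intro _
    exact (invertedMaps L).isLocal.prop_of_iso (asIso (adj.unit.app Z)).symm
      (isLocal_invertedMaps_obj adj _)
  · intro hZ
    exact ((invertedMaps L).isLocal.isLocal_iff_isIso _ hZ (isLocal_invertedMaps_obj adj _)).1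
      (MorphismProperty.le_isLocal_isLocal _ _ (unit_app_mem_invertedMaps adj Z))

end Reflector

section Exponentials

open CartesianMonoidalCategory

variable {C : Type u} [Category.{v} C] [CartesianMonoidalCategory C]

lemma isPullback_whiskerLeft (Z : C) {X Y : C} (f : X ⟶ Y) :
    IsPullback (Z ◁ f) (snd Z X) (snd Z Y) f :=
  ⟨⟨by simp⟩, ⟨PullbackCone.IsLimit.mk _ (fun s => lift (s.fst ≫ fst Z Y) s.snd)
    (fun s => CartesianMonoidalCategory.hom_ext _ _ (by simp) (by simpa using s.condition.symm))
    (fun s => by simp)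
    (fun s m hfst hsnd => CartesianMonoidalCategory.hom_ext _ _ (by simp [← hfst])
      (by simp [← hsnd]))⟩⟩

variable {D : Type u'} [Category.{v'} D] [CartesianMonoidalCategory D] {L : C ⥤ D} {R : D ⥤ C}
  [R.Full] [R.Faithful] [PreservesLimitsOfShape (Discrete WalkingPair) L]

/-- Frobenius reciprocity `L (R A ⊗ X) ≅ A ⊗ L X` for a product-preserving reflector `L ⊣ R`. -/
noncomputable def tensorLeftCompIso (adj : L ⊣ R) (A : D) :
    tensorLeft (R.obj A) ⋙ L ≅ L ⋙ tensorLeft A :=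
  prodComparisonNatIso L (R.obj A) ≪≫
    Functor.isoWhiskerLeft L ((curriedTensor D).mapIso (asIso (adj.counit.app A)))

lemma isLocal_obj_ihom (adj : L ⊣ R) {W : MorphismProperty C} [W.IsStableUnderBaseChange]
    {Z : D} (hZ : W.isLocal (R.obj Z)) (A : D) [Closed A] : W.isLocal (R.obj ((ihom A).obj Z)) := by
  intro X Y f hf
  have adjExp : tensorLeft (R.obj A) ⋙ L ⊣ ihom A ⋙ R :=
    (adj.comp (ihom.adjunction A)).ofNatIsoLeft (tensorLeftCompIso adj A).symm
  have whisker_mem : W (R.obj A ◁ f) := W.of_isPullback (isPullback_whiskerLeft (R.obj A) f).flip hf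
  exact (bijective_comp_obj_iff adjExp f Z).2
    ((bijective_comp_obj_iff adj (R.obj A ◁ f) Z).1 (hZ _ whisker_mem))

end Exponentials

section SubobjectClassifier

open CartesianMonoidalCategory

variable {S : Type u'} [Category.{v'} S] [CartesianMonoidalCategory S]

lemma eq_of_lift_comp_eq_of_isPullback_diagonal {A Ω : S} {truth : 𝟙_ S ⟶ Ω} {δ : A ⊗ A ⟶ Ω}
    (sq : IsPullback (toUnit A) (lift (𝟙 A) (𝟙 A)) truth δ) {X : S} {x y : X ⟶ A}
    (h : lift x x ≫ δ = lift x y ≫ δ) : x = y := by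
  have lift_self : lift x x = x ≫ lift (𝟙 A) (𝟙 A) := by simp
  have true_on_lift : toUnit X ≫ truth = lift x y ≫ δ := by
    rw [← h, lift_self, Category.assoc, ← sq.w, comp_toUnit_assoc]
  have factor := sq.lift_snd _ _ true_on_lift
  have factor_fst := factor =≫ fst A A
  have factor_snd := factor =≫ snd A A
  simp only [Category.assoc, lift_fst, lift_snd, Category.comp_id] at factor_fst factor_snd
  exact factor_fst.symm.trans factor_snd

lemma mono_curry_of_isPullback_diagonal {A Ω : S} [Closed A] {truth : 𝟙_ S ⟶ Ω} {δ : A ⊗ A ⟶ Ω}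
    (sq : IsPullback (toUnit A) (lift (𝟙 A) (𝟙 A)) truth δ) : Mono (MonoidalClosed.curry δ) where
  right_cancellation {X} x y h := by
    have whisker_eq : A ◁ x ≫ δ = A ◁ y ≫ δ := MonoidalClosed.curry_injective (by
      simpa only [MonoidalClosed.curry_natural_left] using h)
    refine eq_of_lift_comp_eq_of_isPullback_diagonal sq ?_
    simpa only [lift_whiskerLeft_assoc, Category.id_comp] using lift x (𝟙 X) ≫= whisker_eq

lemma Classifier.exists_isPullback_power (c : _root_.Classifier S) (A : S) [Closed A] :
    ∃ (s : A ⟶ (ihom A).obj c.Ω) (χ : (ihom A).obj c.Ω ⟶ c.Ω),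
      IsPullback (toUnit A) s c.truth χ := by
  have : IsSplitMono (lift (𝟙 A) (𝟙 A)) := ⟨⟨⟨fst A A, lift_fst _ _⟩⟩⟩
  obtain ⟨δ, isPullback_δ, -⟩ := c.classifies (lift (𝟙 A) (𝟙 A)) inferInstance
  obtain ⟨χ, isPullback_χ, -⟩ :=
    c.classifies (MonoidalClosed.curry δ) (mono_curry_of_isPullback_diagonal isPullback_δ)
  exact ⟨_, χ, isPullback_χ⟩

end SubobjectClassifier

section Cohesion

open CartesianMonoidalCategory

variable {E : Type u} [Category.{v} E] [CartesianMonoidalCategory E]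
  {S : Type u'} [Category.{v'} S] [CartesianMonoidalCategory S]

lemma Classifier.isLocal_obj_of_isLocal_obj_Ω [MonoidalClosed S] (cS : _root_.Classifier S)
    {pShriek : E ⥤ S} {pStar : S ⥤ E} (adj : pShriek ⊣ pStar) [pStar.Full] [pStar.Faithful]
    [PreservesLimitsOfShape (Discrete WalkingPair) pShriek]
    {W : MorphismProperty E} [W.IsStableUnderBaseChange] (hΩ : W.isLocal (pStar.obj cS.Ω)) (A : S) :
    W.isLocal (pStar.obj A) := by
  have := adj.rightAdjoint_preservesLimits
  obtain ⟨s, χ, sq⟩ := cS.exists_isPullback_power A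
  have terminal_isLocal : W.isLocal (pStar.obj (𝟙_ S)) :=
    W.isLocal.prop_of_isTerminal _ (isTerminalTensorUnit.isTerminalObj pStar _)
  exact prop_of_isPullback (sq.map pStar) terminal_isLocal (isLocal_obj_ihom adj hΩ A) hΩ

variable {pStar : S ⥤ E} {pLower : E ⥤ S} (adj : pStar ⊣ pLower)

lemma Classifier.exists_isPullback_map_of_mono (cE : _root_.Classifier E)
    [PreservesLimit (Functor.empty.{0} S) pStar] [Mono (adj.counit.app cE.Ω)]
    {U : E} {B : S} (m : U ⟶ pStar.obj B) [Mono m] :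
    ∃ (u : U ⟶ pStar.obj (𝟙_ S)) (t : 𝟙_ S ⟶ pLower.obj cE.Ω) (b : B ⟶ pLower.obj cE.Ω),
      IsPullback u m (pStar.map t) (pStar.map b) := by
  obtain ⟨χ, isPullback_χ, -⟩ := cE.classifies m inferInstance
  let e : 𝟙_ E ≅ pStar.obj (𝟙_ S) :=
    isTerminalTensorUnit.uniqueUpToIso (isTerminalTensorUnit.isTerminalObj pStar _)
  -- Since the counit at `Ω` is monic, transposing the classifying square does not change its limit.
  let t : 𝟙_ S ⟶ pLower.obj cE.Ω := adj.homEquiv _ _ (e.inv ≫ cE.truth)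
  let b : B ⟶ pLower.obj cE.Ω := adj.homEquiv _ _ χ
  have map_t_counit : pStar.map t ≫ adj.counit.app cE.Ω = e.inv ≫ cE.truth := by
    simp [t, Adjunction.homEquiv_unit]
  have map_b_counit : pStar.map b ≫ adj.counit.app cE.Ω = χ := by
    simp [b, Adjunction.homEquiv_unit]
  have isPullback_e : IsPullback (toUnit U ≫ e.hom) m (e.inv ≫ cE.truth) χ :=
    isPullback_χ.of_iso (Iso.refl _) e (Iso.refl _) (Iso.refl _)
      (by simp) (by simp) (by simp) (by simp)
  exact ⟨_, t, b, IsPullback.of_isLimit (PullbackCone.isLimitOfFactors _ _ _ _ _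
    map_t_counit map_b_counit _ isPullback_e.isLimit)⟩

lemma Classifier.isIso_of_mono_of_isLocal (cE : _root_.Classifier E)
    [PreservesLimit (Functor.empty.{0} S) pStar] [Mono (adj.counit.app cE.Ω)]
    {W : MorphismProperty E} (hW : ∀ A, W.isLocal (pStar.obj A))
    {U : E} {B : S} (m : U ⟶ pStar.obj B) [Mono m] (hm : W m) : IsIso m := by
  obtain ⟨u, t, b, sq⟩ := cE.exists_isPullback_map_of_mono adj m
  have isLocal_U : W.isLocal U := prop_of_isPullback sq (hW _) (hW _) (hW _)
  exact (W.isLocal.isLocal_iff_isIso m isLocal_U (hW B)).1 (W.le_isLocal_isLocal m hm)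

variable [pStar.Full] [pStar.Faithful]

lemma Classifier.isIso_map_of_mono_of_isLocal [HasPullbacks E] (cE : _root_.Classifier E)
    [PreservesLimit (Functor.empty.{0} S) pStar] [Mono (adj.counit.app cE.Ω)]
    {W : MorphismProperty E} [W.IsStableUnderBaseChange] (hW : ∀ A, W.isLocal (pStar.obj A))
    {X Y : E} (m : X ⟶ Y) [Mono m] (hm : W m) : IsIso (pLower.map m) := by
  have : IsIso (pullback.fst (adj.counit.app Y) m) :=
    cE.isIso_of_mono_of_isLocal adj hW _ (W.pullback_fst _ _ hm)
  refine isIso_map_of_counit_factors adj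
    (s := inv (pullback.fst (adj.counit.app Y) m) ≫ pullback.snd (adj.counit.app Y) m) ?_
  rw [Category.assoc, ← pullback.condition, IsIso.inv_hom_id_assoc]

lemma Classifier.isLocal_inf_monomorphisms_obj [HasPullbacks E] (cE : _root_.Classifier E)
    {pUpper : S ⥤ E} (adjUpper : pLower ⊣ pUpper)
    [PreservesLimit (Functor.empty.{0} S) pStar] [Mono (adj.counit.app cE.Ω)]
    {W : MorphismProperty E} [W.IsStableUnderBaseChange] (hW : ∀ A, W.isLocal (pStar.obj A))
    (A : S) : (W ⊓ MorphismProperty.monomorphisms E).isLocal (pUpper.obj A) := by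
  rintro X Y m ⟨hm, _ : Mono m⟩
  have := cE.isIso_map_of_mono_of_isLocal adj hW m hm
  exact (bijective_comp_obj_iff adjUpper m A).2
    (ObjectProperty.isLocal_of_isIso ⊤ (pLower.map m) A trivial)

end Cohesion

theorem least_subtopos_containing_pStar2_is_weak_Aufhebung_general
    {E : Type u} [Category.{v} E] [HasPullbacks E] [CartesianMonoidalCategory E]
    (cE : _root_.Classifier E)
    {S : Type u'} [Category.{v'} S] [CartesianMonoidalCategory S] [MonoidalClosed S]
    (cS : _root_.Classifier S)
    {pShriek : E ⥤ S} {pStar : S ⥤ E} {pLower : E ⥤ S} {pUpper : S ⥤ E}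
    (adj₁ : pShriek ⊣ pStar) (adj₂ : pStar ⊣ pLower) (adj₃ : pLower ⊣ pUpper)
    [pStar.Full] [pStar.Faithful] [Mono (adj₂.counit.app cE.Ω)]
    [PreservesLimitsOfShape (Discrete WalkingPair) pShriek]
    {F : Type u₂} [Category.{v₂} F] {iF : F ⥤ E} [iF.Full] [iF.Faithful]
    {LF : E ⥤ F} (adjF : LF ⊣ iF) [PreservesLimitsOfShape WalkingCospan LF] :
    IsIso (adjF.unit.app (pStar.obj cS.Ω)) ↔
      ∀ A : S, IsIso (adjF.unit.app (pStar.obj A)) ∧ IsIso (adjF.unit.app (pUpper.obj A)) := by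
  refine ⟨fun hΩ A => ?_, fun h => (h cS.Ω).1⟩
  have := adj₁.rightAdjoint_preservesLimits
  have pStar_isLocal : ∀ B, (invertedMaps LF).isLocal (pStar.obj B) :=
    cS.isLocal_obj_of_isLocal_obj_Ω adj₁ ((isIso_unit_app_iff_isLocal adjF _).1 hΩ)
  exact ⟨(isIso_unit_app_iff_isLocal adjF _).2 (pStar_isLocal A),
    isIso_of_isLocal_inf_monomorphisms (unit_app_mem_invertedMaps adjF _)
      (cE.isLocal_inf_monomorphisms_obj adj₂ adj₃ pStar_isLocal A)
      (isLocal_invertedMaps_obj adjF _)⟩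

/-- Let `p : E ⟶ S` be a pre-cohesive geometric morphism between elementary
toposes, `2 = cS.Ω` the subobject classifier of `S`, and `F` (inclusion `iF`, reflector
`LF ⊣ iF` preserving finite limits) the least subtopos of `E` containing `p^* 2`.  Then `F`
is the least subtopos of `E` containing both subcategories `p^*` and `p^!`: for every `A`
in `S` both `p^* A` and `p^! A` belong to `F`, and every subtopos `G` of `E` such that
`p^* A` and `p^! A` belong to `G` for all `A` contains `F`. -/
theorem least_subtopos_containing_pStar2_is_weak_Aufhebung
    {E : Type u} [Category.{v} E] [HasFiniteLimits E] [CartesianMonoidalCategory E]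
    [MonoidalClosed E] (cE : _root_.Classifier E)
    {S : Type u'} [Category.{v'} S] [HasFiniteLimits S] [CartesianMonoidalCategory S]
    [MonoidalClosed S] (cS : _root_.Classifier S)
    (pShriek : E ⥤ S) (pStar : S ⥤ E) (pLower : E ⥤ S) (pUpper : S ⥤ E)
    (adj₁ : pShriek ⊣ pStar) (adj₂ : pStar ⊣ pLower) (adj₃ : pLower ⊣ pUpper)
    [PreservesFiniteLimits pStar] [pStar.Full] [pStar.Faithful]
    (hUnitMono : ∀ A : S, Mono (adj₂.unit.app A))
    (hCounitMono : ∀ X : E, Mono (adj₂.counit.app X))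
    [PreservesFiniteProducts pShriek]
    {F : Type u₂} [Category.{v₂} F] (iF : F ⥤ E) [iF.Full] [iF.Faithful]
    (LF : E ⥤ F) (adjF : LF ⊣ iF) [PreservesFiniteLimits LF]
    (hZ : IsIso (adjF.unit.app (pStar.obj cS.Ω)))
    (hleast : ∀ {F' : Type u₂} [Category.{v₂} F'] (i' : F' ⥤ E), i'.Full → i'.Faithful →
      ∀ (L' : E ⥤ F') (adj' : L' ⊣ i'), PreservesFiniteLimits L' →
      IsIso (adj'.unit.app (pStar.obj cS.Ω)) →
      ∀ X : E, IsIso (adjF.unit.app X) → IsIso (adj'.unit.app X))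
    :
    (∀ A : S, IsIso (adjF.unit.app (pStar.obj A)) ∧ IsIso (adjF.unit.app (pUpper.obj A))) ∧
    (∀ {G : Type u₂} [Category.{v₂} G] (iG : G ⥤ E), iG.Full → iG.Faithful →
      ∀ (LG : E ⥤ G) (adjG : LG ⊣ iG), PreservesFiniteLimits LG →
      (∀ A : S, IsIso (adjG.unit.app (pStar.obj A)) ∧ IsIso (adjG.unit.app (pUpper.obj A))) →
      ∀ X : E, IsIso (adjF.unit.app X) → IsIso (adjG.unit.app X)) := by
  have := hCounitMono cE.Ω
  refine ⟨?_, fun iG full faithful LG adjG lex hG => hleast iG full faithful LG adjG lex ?_⟩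
  · exact (least_subtopos_containing_pStar2_is_weak_Aufhebung_general
      cE cS adj₁ adj₂ adj₃ adjF).1 hZ
  · exact (least_subtopos_containing_pStar2_is_weak_Aufhebung_general
      cE cS adj₁ adj₂ adj₃ adjG).2 hG
end
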